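/- If two finite simplicial complexes triangulate homeomorphic compact surfaces, then they have the same alternating sum n₀ - n₁ + n₂. -/

import Mathlib

open Geometry

/-- The number of `i`-dimensional simplices (faces with `i + 1` vertices) in a set of faces. -/
noncomputable def faceCount {α : Type*} (F : Set (Finset α)) (i : ℕ) : ℕ :=
  {s ∈ F | s.card = i + 1}.ncard


namespace EulerInv

section Algebra
variable {R V W : Type*} [Ring R] [AddCommGroup V] [Module R V] [AddCommGroup W] [Module R W]

/-- length of `Q / P` -/
noncomputable def rlen (P Q : Submodule R V) : ℕ∞ := Module.length R (Q ⧸ P.submoduleOf Q)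

lemma rlen_trans {P Q S : Submodule R V} (h1 : P ≤ Q) (h2 : Q ≤ S) :
    rlen P S = rlen P Q + rlen Q S := by
  unfold rlen
  have c1 : P.submoduleOf Q ≤ (P.submoduleOf S).comap (Submodule.inclusion h2) := fun x hx => hx
  have c2 : P.submoduleOf S ≤ (Q.submoduleOf S).comap LinearMap.id := fun x hx => h1 hx
  refine Module.length_eq_add_of_exact
    (Submodule.mapQ (P.submoduleOf Q) (P.submoduleOf S) (Submodule.inclusion h2) c1)
    (Submodule.mapQ (P.submoduleOf S) (Q.submoduleOf S) LinearMap.id c2) ?_ ?_ ?_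
  · rw [← LinearMap.ker_eq_bot, LinearMap.ker_eq_bot']
    intro x
    induction x using Submodule.Quotient.induction_on with
    | H x =>
      intro hx
      have hx' := (Submodule.Quotient.mk_eq_zero (P.submoduleOf S)).1 hx
      exact (Submodule.Quotient.mk_eq_zero _).2 hx'
  · intro x
    induction x using Submodule.Quotient.induction_on with
    | H x => exact ⟨Submodule.Quotient.mk x, rfl⟩
  · intro x
    induction x using Submodule.Quotient.induction_on with
    | H x =>
      constructor
      · intro hx
        have hx' := (Submodule.Quotient.mk_eq_zero (Q.submoduleOf S)).1 hx
        exact ⟨Submodule.Quotient.mk ⟨x.1, hx'⟩, rfl⟩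
      · rintro ⟨y, hy⟩
        induction y using Submodule.Quotient.induction_on with
        | H y =>
          have h3 : (y.1 - x.1 : V) ∈ P := (Submodule.Quotient.eq (P.submoduleOf S)).1 hy
          have h4 : x.1 = y.1 - (y.1 - x.1) := by abel
          refine (Submodule.Quotient.mk_eq_zero (Q.submoduleOf S)).2 ?_
          change x.1 ∈ Q
          rw [h4]
          exact Q.sub_mem y.2 (h1 h3)

lemma rlen_self (P : Submodule R V) : rlen P P = 0 := by
  unfold rlen
  rw [Module.length_eq_zero_iff, Submodule.submoduleOf_self]
  infer_instance

lemma rlen_inf_sup (P Q : Submodule R V) : rlen (P ⊓ Q) P = rlen Q (P ⊔ Q) := by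
  exact (LinearMap.quotientInfEquivSupQuotient P Q).length_eq

/-- Two quotients covered by the same module with the same kernel have the same length. -/
lemma rlen_eq_of_cover {U : Type*} [AddCommGroup U] [Module R U]
    {P Q : Submodule R V} {P' Q' : Submodule R W}
    (f : U →ₗ[R] V) (g : U →ₗ[R] W) (hf : ∀ u, f u ∈ Q) (hg : ∀ u, g u ∈ Q')
    (hfs : ∀ x ∈ Q, ∃ u, x - f u ∈ P) (hgs : ∀ x ∈ Q', ∃ u, x - g u ∈ P')
    (hk : ∀ u, f u ∈ P ↔ g u ∈ P') : rlen P Q = rlen P' Q' := by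
  unfold rlen
  let F : U →ₗ[R] (Q ⧸ P.submoduleOf Q) := (Submodule.mkQ _).comp (f.codRestrict Q hf)
  let G : U →ₗ[R] (Q' ⧸ P'.submoduleOf Q') := (Submodule.mkQ _).comp (g.codRestrict Q' hg)
  have hF : Function.Surjective F := by
    intro x
    induction x using Submodule.Quotient.induction_on with
    | H x =>
      obtain ⟨u, hu⟩ := hfs x.1 x.2
      exact ⟨u, ((Submodule.Quotient.eq (P.submoduleOf Q)).2 hu).symm⟩
  have hG : Function.Surjective G := by
    intro x
    induction x using Submodule.Quotient.induction_on with
    | H x =>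
      obtain ⟨u, hu⟩ := hgs x.1 x.2
      exact ⟨u, ((Submodule.Quotient.eq (P'.submoduleOf Q')).2 hu).symm⟩
  have hker : LinearMap.ker F = LinearMap.ker G := by
    ext u
    have h1 : F u = 0 ↔ f u ∈ P := Submodule.Quotient.mk_eq_zero _
    have h2 : G u = 0 ↔ g u ∈ P' := Submodule.Quotient.mk_eq_zero _
    rw [LinearMap.mem_ker, LinearMap.mem_ker, h1, h2, hk]
  exact (((F.quotKerEquivOfSurjective hF).symm.trans (Submodule.quotEquivOfEq _ _ hker)).trans
    (G.quotKerEquivOfSurjective hG)).length_eq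

end Algebra

section Cx
variable {R : Type*} [Ring R] {C : ℕ → Type*} [∀ q, AddCommGroup (C q)] [∀ q, Module R (C q)]
  (d : ∀ q, C q →ₗ[R] C (q + 1))

/-- cocycles relative to `N` -/
def Zc (N : ∀ q, Submodule R (C q)) (q : ℕ) : Submodule R (C q) := (N (q + 1)).comap (d q)

/-- coboundaries relative to `N` -/
def Bc (N : ∀ q, Submodule R (C q)) : ∀ q, Submodule R (C q)
  | 0 => N 0
  | q + 1 => N (q + 1) ⊔ LinearMap.range (d q)

/-- length of the cohomology of `C / N` in degree `q` -/
noncomputable def hc (N : ∀ q, Submodule R (C q)) (q : ℕ) : ℕ∞ := rlen (Bc d N q) (Zc d N q)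

/-- the sequence `h` has Euler characteristic `e` -/
def HasChi (h : ℕ → ℕ∞) (e : ℤ) : Prop :=
  ∃ k : ℕ → ℕ, (∀ q, h q = k q) ∧ ∃ n, (∀ q ≥ n, k q = 0) ∧
    ∑ q ∈ Finset.range n, (-1 : ℤ) ^ q * k q = e

lemma sum_stable {k : ℕ → ℕ} {n m : ℕ} (hn : ∀ q ≥ n, k q = 0) (h : n ≤ m) :
    ∑ q ∈ Finset.range n, (-1 : ℤ) ^ q * k q = ∑ q ∈ Finset.range m, (-1 : ℤ) ^ q * k q := by
  refine Finset.sum_subset (by simpa using h) ?_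
  intro x _ hx
  simp at hx
  simp [hn x hx]

lemma HasChi.unique {h : ℕ → ℕ∞} {e e' : ℤ} (H : HasChi h e) (H' : HasChi h e') : e = e' := by
  obtain ⟨k, hk, n, hn, rfl⟩ := H
  obtain ⟨k', hk', n', hn', rfl⟩ := H'
  have : k = k' := by
    ext q
    exact_mod_cast (hk q).symm.trans (hk' q)
  subst this
  rw [sum_stable hn (le_max_left n n'), sum_stable hn' (le_max_right n n')]

lemma chi_step {a b g hI hN hS : ℕ → ℕ∞} {eN eS : ℤ} (h0 : b 0 = 0)
    (h1 : ∀ q, hI q = a q + b q) (h2 : ∀ q, hN q = g q + a q)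
    (h3 : ∀ q, hS q = b (q + 1) + g q) (HN : HasChi hN eN) (HS : HasChi hS eS) :
    HasChi hI (eN - eS) := by
  obtain ⟨k, hk, n, hn, rfl⟩ := HN
  obtain ⟨k', hk', n', hn', rfl⟩ := HS
  have ha : ∀ q, ∃ m : ℕ, a q = m := fun q => by
    have : a q ≠ ⊤ := by
      intro h
      have := h2 q
      rw [hk, h] at this
      simp at this
    exact ⟨(a q).toNat, (ENat.natCast_toNat this).symm⟩
  have hg : ∀ q, ∃ m : ℕ, g q = m := fun q => by
    have : g q ≠ ⊤ := by
      intro h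
      have := h2 q
      rw [hk, h] at this
      simp at this
    exact ⟨(g q).toNat, (ENat.natCast_toNat this).symm⟩
  have hb : ∀ q, ∃ m : ℕ, b q = m := fun q => by
    have : b q ≠ ⊤ := by
      intro h
      cases q with
      | zero => simp [h0] at h
      | succ q =>
        have := h3 q
        rw [hk', h] at this
        simp at this
    exact ⟨(b q).toNat, (ENat.natCast_toNat this).symm⟩
  choose a' ha using ha
  choose b' hb using hb
  choose g' hg using hg
  have e0 : b' 0 = 0 := by
    have := hb 0
    rw [h0] at this
    exact_mod_cast this.symm
  have e2 : ∀ q, k q = g' q + a' q := fun q => by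
    have := h2 q
    rw [hk, ha, hg] at this
    exact_mod_cast this
  have e3 : ∀ q, k' q = b' (q + 1) + g' q := fun q => by
    have := h3 q
    rw [hk', hb, hg] at this
    exact_mod_cast this
  let m := max n n' + 1
  have hz : ∀ q ≥ m, a' q + b' q = 0 := by
    intro q hq
    obtain ⟨p, rfl⟩ : ∃ p, q = p + 1 := ⟨q - 1, by omega⟩
    have t1 := hn (p + 1) (by omega)
    have t2 := hn' p (by omega)
    have := e2 (p + 1)
    have := e3 p
    omega
  refine ⟨fun q => a' q + b' q, fun q => by rw [h1, ha, hb]; push_cast; rfl, m, hz, ?_⟩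
  rw [sum_stable hn (show n ≤ m by omega), sum_stable hn' (show n' ≤ m by omega)]
  have key : ∀ j, ∑ q ∈ Finset.range j, (-1 : ℤ) ^ q * ((a' q + b' q : ℕ) : ℤ)
      = ∑ q ∈ Finset.range j, (-1 : ℤ) ^ q * k q - ∑ q ∈ Finset.range j, (-1 : ℤ) ^ q * k' q
        - (-1) ^ j * b' j := by
    intro j
    induction j with
    | zero => simp [e0]
    | succ j ih =>
      rw [Finset.sum_range_succ, Finset.sum_range_succ, Finset.sum_range_succ, ih, e2, e3]
      push_cast
      ring
  rw [key]
  have : b' m = 0 := by have := hz m le_rfl; omega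
  simp [this]

variable {d}

lemma Bc_le_Zc (dd : ∀ q x, d (q + 1) (d q x) = 0) {N : ∀ q, Submodule R (C q)}
    (hN : ∀ q, ∀ x ∈ N q, d q x ∈ N (q + 1)) (q : ℕ) : Bc d N q ≤ Zc d N q := by
  cases q with
  | zero => exact hN 0
  | succ q =>
    refine sup_le (hN _) ?_
    rintro _ ⟨y, rfl⟩
    change d (q + 1) (d q y) ∈ N (q + 2)
    rw [dd]
    exact zero_mem _

lemma N_le_Bc (N : ∀ q, Submodule R (C q)) (q : ℕ) : N q ≤ Bc d N q := by
  cases q with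
  | zero => exact le_rfl
  | succ q => exact le_sup_left

lemma Bc_mono {N M : ∀ q, Submodule R (C q)} (h : ∀ q, N q ≤ M q) (q : ℕ) :
    Bc d N q ≤ Bc d M q := by
  cases q with
  | zero => exact h 0
  | succ q => exact sup_le_sup (h _) le_rfl

/-- Mayer-Vietoris for Euler characteristics, when `M` is acyclic. -/
lemma mayer_vietoris (dd : ∀ q x, d (q + 1) (d q x) = 0) {N M I S : ∀ q, Submodule R (C q)}
    (hN : ∀ q, ∀ x ∈ N q, d q x ∈ N (q + 1)) (hM : ∀ q, ∀ x ∈ M q, d q x ∈ M (q + 1))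
    (hI : ∀ q, I q = N q ⊓ M q) (hS : ∀ q, S q = N q ⊔ M q)
    (hac : ∀ q, Zc d M q ≤ Bc d M q) {eN eS : ℤ}
    (HN : HasChi (hc d N) eN) (HS : HasChi (hc d S) eS) : HasChi (hc d I) (eN - eS) := by
  have hZM : ∀ q, Bc d M q = Zc d M q := fun q => le_antisymm (Bc_le_Zc dd hM q) (hac q)
  have hII : ∀ q, ∀ x ∈ I q, d q x ∈ I (q + 1) := by
    intro q x hx
    rw [hI] at hx ⊢
    exact ⟨hN _ _ hx.1, hM _ _ hx.2⟩
  have hSS : ∀ q, ∀ x ∈ S q, d q x ∈ S (q + 1) := by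
    intro q x hx
    rw [hS] at hx ⊢
    obtain ⟨y, hy, z, hz, rfl⟩ := Submodule.mem_sup.1 hx
    rw [map_add]
    exact Submodule.add_mem_sup (hN _ _ hy) (hM _ _ hz)
  have hIN : ∀ q, I q ≤ N q := fun q => by rw [hI]; exact inf_le_left
  have hIM : ∀ q, I q ≤ M q := fun q => by rw [hI]; exact inf_le_right
  have hZI : ∀ q, Zc d I q = Zc d N q ⊓ Zc d M q := by
    intro q
    unfold Zc
    rw [hI, Submodule.comap_inf]
  have hBS : ∀ q, Bc d S q = Bc d N q ⊔ Zc d M q := by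
    intro q
    rw [← hZM]
    cases q with
    | zero => exact hS 0
    | succ q =>
      simp only [Bc, hS]
      rw [sup_sup_sup_comm, sup_idem]
  have hBI : ∀ q, Bc d I q ≤ Bc d N q ⊓ Zc d M q := by
    intro q
    rw [← hZM]
    exact le_inf (Bc_mono hIN q) (Bc_mono hIM q)
  have hBZN := fun q => Bc_le_Zc dd hN q
  refine chi_step (a := fun q => rlen (Bc d N q ⊓ Zc d M q) (Zc d N q ⊓ Zc d M q))
    (b := fun q => rlen (Bc d I q) (Bc d N q ⊓ Zc d M q))
    (g := fun q => rlen (Bc d N q ⊔ (Zc d N q ⊓ Zc d M q)) (Zc d N q)) ?_ ?_ ?_ ?_ HN HS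
  · have : Bc d I 0 = Bc d N 0 ⊓ Zc d M 0 := by
      rw [← hZM]; exact hI 0
    rw [this, rlen_self]
  · intro q
    unfold hc
    rw [hZI, rlen_trans (hBI q) (inf_le_inf_right _ (hBZN q)), add_comm]
  · intro q
    unfold hc
    rw [rlen_trans (P := Bc d N q) (Q := Bc d N q ⊔ (Zc d N q ⊓ Zc d M q)) (S := Zc d N q)
      le_sup_left (sup_le (hBZN q) inf_le_left), add_comm]
    congr 1
    rw [sup_comm, ← rlen_inf_sup]
    congr 1
    rw [inf_right_comm, inf_eq_right.2 (hBZN q)]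
  · intro q
    unfold hc
    have hZS : Zc d N q ⊔ Zc d M q ≤ Zc d S q := by
      refine sup_le ?_ ?_
      · intro x hx
        change d q x ∈ S _
        rw [hS]
        exact Submodule.mem_sup_left hx
      · intro x hx
        change d q x ∈ S _
        rw [hS]
        exact Submodule.mem_sup_right hx
    rw [hBS, rlen_trans (sup_le_sup_right (hBZN q) _) hZS, add_comm]
    congr 1
    · -- connecting homomorphism
      let U : Submodule R (C q × C (q + 1)) :=
        { carrier := {p | p.2 ∈ N (q + 1) ∧ d q p.1 - p.2 ∈ M (q + 1)}
          add_mem' := by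
            rintro x y ⟨h1, h2⟩ ⟨h3, h4⟩
            refine ⟨add_mem h1 h3, ?_⟩
            have : d q (x + y).1 - (x + y).2 = (d q x.1 - x.2) + (d q y.1 - y.2) := by
              simp only [Prod.fst_add, Prod.snd_add, map_add]; abel
            rw [this]
            exact add_mem h2 h4
          zero_mem' := by simp
          smul_mem' := by
            rintro r x ⟨h1, h2⟩
            refine ⟨Submodule.smul_mem _ _ h1, ?_⟩
            have : d q (r • x).1 - (r • x).2 = r • (d q x.1 - x.2) := by
              simp [smul_sub]
            rw [this]
            exact Submodule.smul_mem _ _ h2 }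
      refine rlen_eq_of_cover ((LinearMap.fst R _ _).comp U.subtype)
        ((LinearMap.snd R _ _).comp U.subtype) ?_ ?_ ?_ ?_ ?_
      · rintro ⟨⟨z, n⟩, h1, h2⟩
        change d q z ∈ S _
        have : d q z = n + (d q z - n) := by abel
        rw [this, hS]
        exact Submodule.add_mem_sup h1 h2
      · rintro ⟨⟨z, n⟩, h1, h2⟩
        refine ⟨N_le_Bc N _ h1, ?_⟩
        change n ∈ Zc d M (q + 1)
        rw [← hZM]
        have : n = -(d q z - n) + d q z := by abel
        rw [this]
        exact Submodule.add_mem_sup (neg_mem h2) ⟨z, rfl⟩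
      · intro z hz
        change d q z ∈ S _ at hz
        rw [hS] at hz
        obtain ⟨n, hn, m, hm, e⟩ := Submodule.mem_sup.1 hz
        refine ⟨⟨⟨z, n⟩, hn, ?_⟩, ?_⟩
        · change d q z - n ∈ _
          rw [← e]; simpa using hm
        · change z - z ∈ _
          simp
      · rintro x ⟨hx1, hx2⟩
        change x ∈ Zc d M _ at hx2
        rw [← hZM] at hx2
        obtain ⟨n, hn, _, ⟨c, rfl⟩, e⟩ := Submodule.mem_sup.1 hx1
        obtain ⟨m, hm, _, ⟨c', rfl⟩, e'⟩ := Submodule.mem_sup.1 hx2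
        refine ⟨⟨⟨c' - c, n⟩, hn, ?_⟩, ?_⟩
        · change d q (c' - c) - n ∈ _
          have : d q (c' - c) - n = - m := by
            have h5 : n + d q c = m + d q c' := e.trans e'.symm
            rw [map_sub]
            rw [← sub_eq_zero] at h5 ⊢
            rw [← neg_eq_zero, ← h5]; abel
          rw [this]
          exact neg_mem hm
        · change x - n ∈ _
          rw [← e, add_sub_cancel_left]
          exact Submodule.mem_sup_right ⟨c, rfl⟩
      · rintro ⟨⟨z, n⟩, h1, h2⟩
        change z ∈ _ ↔ n ∈ I (q + 1) ⊔ LinearMap.range (d q)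
        change n ∈ N (q + 1) at h1
        change d q z - n ∈ M (q + 1) at h2
        constructor
        · intro hz
          obtain ⟨a, ha, b, hb, rfl⟩ := Submodule.mem_sup.1 hz
          change d q a ∈ N (q + 1) at ha
          change d q b ∈ M (q + 1) at hb
          have : n = (n - d q a) + d q a := by abel
          rw [this]
          refine Submodule.add_mem_sup ?_ ⟨a, rfl⟩
          rw [hI]
          refine ⟨sub_mem h1 ha, ?_⟩
          have : n - d q a = d q b - (d q (a + b) - n) := by rw [map_add]; abel
          rw [this]
          exact sub_mem hb h2
        · intro hn
          obtain ⟨i, hi, _, ⟨c, rfl⟩, e⟩ := Submodule.mem_sup.1 hn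
          have : z = c + (z - c) := by abel
          rw [this]
          rw [← e] at h1 h2
          refine Submodule.add_mem_sup ?_ ?_
          · change d q c ∈ N (q + 1)
            have : d q c = (i + d q c) - i := by abel
            rw [this]
            exact sub_mem h1 (hIN _ hi)
          · change d q (z - c) ∈ M (q + 1)
            have : d q (z - c) = (d q z - (i + d q c)) + i := by rw [map_sub]; abel
            rw [this]
            exact add_mem h2 (hIM _ hi)
    · have e1 : Zc d N q ⊔ Zc d M q = Zc d N q ⊔ (Bc d N q ⊔ Zc d M q) := by
        rw [← sup_assoc, sup_eq_left.2 (hBZN q)]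
      rw [e1, ← rlen_inf_sup]
      congr 1
      rw [inf_comm, sup_inf_assoc_of_le _ (hBZN q), inf_comm (Zc d M q)]

end Cx
end EulerInv

namespace EulerInv

section Cochains

/-- Alexander-Spanier cochains (all functions), with the degree shifted by one -/
abbrev Co (X : Type*) (q : ℕ) := (Fin q → X) → ℚ

/-- the coboundary, defined by recursion on the first vertex -/
def dl (X : Type*) : ∀ q, Co X q → Co X (q + 1)
  | 0, φ => fun _ => φ Fin.elim0
  | q + 1, φ => fun t => φ (Fin.tail t) - dl X q (fun s => φ (Fin.cons (t 0) s)) (Fin.tail t)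

variable {X : Type*}

lemma dl_add (q : ℕ) (φ ψ : Co X q) : dl X q (φ + ψ) = dl X q φ + dl X q ψ := by
  induction q with
  | zero => rfl
  | succ q ih =>
    funext t
    have := congrFun (ih (fun s => φ (Fin.cons (t 0) s)) (fun s => ψ (Fin.cons (t 0) s)))
      (Fin.tail t)
    simp only [Pi.add_apply] at this
    simp only [dl, Pi.add_apply]
    have e : (fun s => φ (Fin.cons (t 0) s) + ψ (Fin.cons (t 0) s))
      = (fun s => φ (Fin.cons (t 0) s)) + (fun s => ψ (Fin.cons (t 0) s)) := rfl
    rw [e, this]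
    ring

lemma dl_smul (q : ℕ) (r : ℚ) (φ : Co X q) : dl X q (r • φ) = r • dl X q φ := by
  induction q with
  | zero => rfl
  | succ q ih =>
    funext t
    have := congrFun (ih (fun s => φ (Fin.cons (t 0) s))) (Fin.tail t)
    simp only [Pi.smul_apply, smul_eq_mul] at this
    simp only [dl, Pi.smul_apply, smul_eq_mul]
    have e : (fun s => r * φ (Fin.cons (t 0) s))
      = r • (fun s => φ (Fin.cons (t 0) s)) := rfl
    rw [e, this]
    ring

/-- the coboundary as a linear map -/
def dL (X : Type*) (q : ℕ) : Co X q →ₗ[ℚ] Co X (q + 1) where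
  toFun := dl X q
  map_add' := dl_add q
  map_smul' := dl_smul q

lemma dL_zero_apply (φ : Co X 0) (t : Fin 1 → X) : dL X 0 φ t = φ Fin.elim0 := rfl

lemma dL_cons (q : ℕ) (φ : Co X (q + 1)) (x : X) (t : Fin (q + 1) → X) :
    dL X (q + 1) φ (Fin.cons x t) = φ t - dL X q (fun s => φ (Fin.cons x s)) t := rfl

lemma dL_dL (q : ℕ) (φ : Co X q) : dL X (q + 1) (dL X q φ) = 0 := by
  induction q with
  | zero =>
    funext t
    rw [← Fin.cons_self_tail t, dL_cons, dL_zero_apply, dL_zero_apply, dL_zero_apply]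
    simp
  | succ q ih =>
    funext t
    rw [← Fin.cons_self_tail t, dL_cons]
    have e : (fun s => dL X (q + 1) φ (Fin.cons (t 0) s))
      = φ - dL X q (fun s => φ (Fin.cons (t 0) s)) := by
      funext s
      rw [dL_cons]
      rfl
    rw [e, map_sub, ih]
    simp

lemma dL_local (q : ℕ) (φ : Co X q) (U : Set X) (h : ∀ t, (∀ i, t i ∈ U) → φ t = 0)
    (t : Fin (q + 1) → X) (ht : ∀ i, t i ∈ U) : dL X q φ t = 0 := by
  induction q with
  | zero => exact h _ (fun i => i.elim0)
  | succ q ih =>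
    have ht' : ∀ i, Fin.tail t i ∈ U := fun i => ht i.succ
    rw [← Fin.cons_self_tail t, dL_cons, h _ ht', ih _ ?_ _ ht']
    · simp
    · intro s hs
      refine h _ ?_
      intro i
      refine Fin.cases ?_ ?_ i
      · exact ht 0
      · intro j
        exact hs j

end Cochains

section Germs
variable {X : Type*} [MetricSpace X]

/-- cochains vanishing near `A` (and, in augmentation degree `0`, vanishing) -/
def Nn (A : Set X) (q : ℕ) : Submodule ℚ (Co X q) where
  carrier := {φ | (q = 0 → φ = 0) ∧
    ∀ a ∈ A, ∃ U : Set X, IsOpen U ∧ a ∈ U ∧ ∀ t, (∀ i, t i ∈ U) → φ t = 0}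
  add_mem' := by
    rintro φ ψ ⟨h1, h2⟩ ⟨h3, h4⟩
    refine ⟨fun h => by rw [h1 h, h3 h, add_zero], fun a ha => ?_⟩
    obtain ⟨U, hU, haU, h⟩ := h2 a ha
    obtain ⟨U', hU', haU', h'⟩ := h4 a ha
    exact ⟨U ∩ U', hU.inter hU', ⟨haU, haU'⟩, fun t ht => by
      rw [Pi.add_apply, h t fun i => (ht i).1, h' t fun i => (ht i).2, add_zero]⟩
  zero_mem' := ⟨fun _ => rfl, fun a _ => ⟨Set.univ, isOpen_univ, trivial, fun _ _ => rfl⟩⟩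
  smul_mem' := by
    rintro r φ ⟨h1, h2⟩
    refine ⟨fun h => by rw [h1 h, smul_zero], fun a ha => ?_⟩
    obtain ⟨U, hU, haU, h⟩ := h2 a ha
    exact ⟨U, hU, haU, fun t ht => by rw [Pi.smul_apply, h t ht, smul_zero]⟩

lemma mem_Nn {A : Set X} {q : ℕ} {φ : Co X q} : φ ∈ Nn A q ↔ (q = 0 → φ = 0) ∧
    ∀ a ∈ A, ∃ U : Set X, IsOpen U ∧ a ∈ U ∧ ∀ t, (∀ i, t i ∈ U) → φ t = 0 := Iff.rfl

lemma Nn_d (A : Set X) (q : ℕ) : ∀ φ ∈ Nn A q, dL X q φ ∈ Nn A (q + 1) := by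
  rintro φ ⟨h1, h2⟩
  refine ⟨fun h => by omega, fun a ha => ?_⟩
  obtain ⟨U, hU, haU, h⟩ := h2 a ha
  exact ⟨U, hU, haU, fun t ht => dL_local q φ U h t ht⟩

lemma Nn_anti {A B : Set X} (h : A ⊆ B) (q : ℕ) : Nn B q ≤ Nn A q :=
  fun _ hφ => ⟨hφ.1, fun a ha => hφ.2 a (h ha)⟩

lemma Nn_union (A B : Set X) (q : ℕ) : Nn (A ∪ B) q = Nn A q ⊓ Nn B q := by
  refine le_antisymm (le_inf (Nn_anti Set.subset_union_left q) (Nn_anti Set.subset_union_right q)) ?_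
  rintro φ ⟨h1, h2⟩
  refine ⟨h1.1, ?_⟩
  rintro a (ha | ha)
  · exact h1.2 a ha
  · exact h2.2 a ha

lemma Nn_inter {A B : Set X} (hA : IsClosed A) (hB : IsClosed B) (q : ℕ) :
    Nn (A ∩ B) q = Nn A q ⊔ Nn B q := by
  classical
  refine le_antisymm ?_ (sup_le (Nn_anti Set.inter_subset_left q) (Nn_anti Set.inter_subset_right q))
  rintro φ ⟨h1, h2⟩
  rcases Nat.eq_zero_or_pos q with hq | hq
  · rw [h1 hq]; exact zero_mem _
  -- radius of the neighbourhoods of points off the other set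
  have hrad : ∀ (B : Set X), IsClosed B → ∀ a, a ∉ B → ∃ r : ℝ, 0 < r ∧ ∀ b ∈ B, 2 * r ≤ dist a b := by
    intro B hB a ha
    obtain ⟨r, hr, hb⟩ := Metric.isOpen_iff.1 hB.isOpen_compl a ha
    refine ⟨r / 2, by positivity, fun b hbB => ?_⟩
    by_contra hlt
    push Not at hlt
    exact hb (show b ∈ Metric.ball a r by rw [Metric.mem_ball, dist_comm]; linarith) hbB
  choose! U hU haU hφ using h2
  choose! r hr0 hr using hrad B hB
  choose! s hs0 hs using hrad A hA
  let G : Set (Fin q → X) := {t | (∃ a ∈ A ∩ B, ∀ i, t i ∈ U a) ∨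
    ∃ a ∈ A, a ∉ B ∧ ∀ i, t i ∈ Metric.ball a (r a)}
  -- `χ` vanishes near `A`, and agrees with `φ` near `B`
  let χ : Co X q := fun t => if t ∈ G then 0 else φ t
  have e : φ = χ + (φ - χ) := by abel
  rw [e]
  refine Submodule.add_mem_sup ?_ ?_
  · refine ⟨fun h => by omega, fun a ha => ?_⟩
    by_cases hb : a ∈ B
    · refine ⟨U a, hU a ⟨ha, hb⟩, haU a ⟨ha, hb⟩, fun t ht => ?_⟩
      exact if_pos (Or.inl ⟨a, ⟨ha, hb⟩, ht⟩)
    · refine ⟨Metric.ball a (r a), Metric.isOpen_ball, Metric.mem_ball_self (hr0 a hb),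
        fun t ht => ?_⟩
      exact if_pos (Or.inr ⟨a, ha, hb, ht⟩)
  · refine ⟨fun h => by omega, fun b hb => ?_⟩
    by_cases ha : b ∈ A
    · refine ⟨U b, hU b ⟨ha, hb⟩, haU b ⟨ha, hb⟩, fun t ht => ?_⟩
      have h3 : t ∈ G := Or.inl ⟨b, ⟨ha, hb⟩, ht⟩
      simp [χ, h3, hφ b ⟨ha, hb⟩ t ht]
    · refine ⟨Metric.ball b (s b), Metric.isOpen_ball, Metric.mem_ball_self (hs0 b ha),
        fun t ht => ?_⟩
      by_cases hG : t ∈ G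
      · rcases hG with ⟨a, haB, hta⟩ | ⟨a, haA, haB, hta⟩
        · have h3 : t ∈ G := Or.inl ⟨a, haB, hta⟩
          simp [χ, h3, hφ a haB t hta]
        · exfalso
          have e1 := hr a haB b hb
          have e2 := hs b ha a haA
          have e3 := hta ⟨0, hq⟩
          have e4 := ht ⟨0, hq⟩
          rw [Metric.mem_ball] at e3 e4
          have e5 := dist_triangle_left a b (t ⟨0, hq⟩)
          rw [dist_comm b a] at e2
          linarith
      · simp [χ, hG]

/-- the germs at `A` form an acyclic (augmented) complex -/
def Acyc (A : Set X) : Prop := ∀ q, Zc (dL X) (Nn A) q ≤ Bc (dL X) (Nn A) q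

lemma Zc_anti {A B : Set X} (h : A ⊆ B) (q : ℕ) : Zc (dL X) (Nn B) q ≤ Zc (dL X) (Nn A) q :=
  fun _ hφ => Nn_anti h (q + 1) hφ

lemma acyc_singleton (x : X) : Acyc ({x} : Set X) := by
  rintro (_ | q) φ hφ
  · obtain ⟨U, hU, hx, h⟩ := (mem_Nn.1 hφ).2 x rfl
    have h0 := h (fun _ => x) (fun _ => hx)
    rw [dL_zero_apply] at h0
    have : φ = 0 := by
      funext t
      rw [Subsingleton.elim t Fin.elim0, h0]
      rfl
    rw [this]
    exact zero_mem _
  · obtain ⟨U, hU, hx, h⟩ := (mem_Nn.1 hφ).2 x rfl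
    have e : φ = (φ - dL X q (fun s => φ (Fin.cons x s))) + dL X q (fun s => φ (Fin.cons x s)) := by
      abel
    rw [e]
    refine Submodule.add_mem_sup ⟨fun h => by omega, ?_⟩ ⟨_, rfl⟩
    rintro a rfl
    refine ⟨U, hU, hx, fun t ht => ?_⟩
    have := h (Fin.cons a t) (fun i => Fin.cases hx ht i)
    rwa [dL_cons] at this

lemma acyc_concat {A B : Set X} (hA : IsClosed A) (hB : IsClosed B) (h : Acyc (A ∩ B)) (q : ℕ)
    {φ : Co X q} (h1 : φ ∈ Bc (dL X) (Nn A) q) (h2 : φ ∈ Bc (dL X) (Nn B) q) :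
    φ ∈ Bc (dL X) (Nn (A ∪ B)) q := by
  cases q with
  | zero =>
    change φ ∈ Nn _ 0
    rw [Nn_union]
    exact ⟨h1, h2⟩
  | succ q =>
    obtain ⟨n, hn, _, ⟨c, rfl⟩, e⟩ := Submodule.mem_sup.1 h1
    obtain ⟨m, hm, _, ⟨c', rfl⟩, e'⟩ := Submodule.mem_sup.1 h2
    have h3 : c - c' ∈ Zc (dL X) (Nn (A ∩ B)) q := by
      change dL X q (c - c') ∈ Nn (A ∩ B) (q + 1)
      have : dL X q (c - c') = m - n := by
        rw [map_sub, sub_eq_sub_iff_add_eq_add, add_comm (dL X q c) n, e, ← e']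
      rw [this, Nn_inter hA hB]
      exact sub_mem (Submodule.mem_sup_right hm) (Submodule.mem_sup_left hn)
    -- a cochain `w` with `d w = 0` correcting the difference
    obtain ⟨u, hu, v, hv, w, hw, e2⟩ : ∃ u ∈ Nn A q, ∃ v ∈ Nn B q, ∃ w, dL X q w = 0 ∧
        c - c' = u + v + w := by
      have h4 := h q h3
      cases q with
      | zero =>
        change _ ∈ Nn (A ∩ B) 0 at h4
        rw [Nn_inter hA hB] at h4
        obtain ⟨u, hu, v, hv, e⟩ := Submodule.mem_sup.1 h4
        exact ⟨u, hu, v, hv, 0, map_zero _, by rw [e, add_zero]⟩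
      | succ q =>
        obtain ⟨y, hy, _, ⟨z, rfl⟩, e⟩ := Submodule.mem_sup.1 h4
        rw [Nn_inter hA hB] at hy
        obtain ⟨u, hu, v, hv, rfl⟩ := Submodule.mem_sup.1 hy
        exact ⟨u, hu, v, hv, _, dL_dL _ _, e.symm⟩
    have e3 : φ = (φ - dL X q (c - u)) + dL X q (c - u) := by abel
    rw [e3]
    refine Submodule.add_mem_sup ?_ ⟨_, rfl⟩
    rw [Nn_union]
    constructor
    · have : φ - dL X q (c - u) = n + dL X q u := by
        rw [← e, map_sub]; abel
      rw [this]
      exact add_mem hn (Nn_d A q u hu)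
    · have h5 : c - u = c' + v + w := by
        rw [sub_eq_iff_eq_add] at e2 ⊢
        rw [e2]; abel
      have : φ - dL X q (c - u) = m - dL X q v := by
        rw [h5, map_add, map_add, hw, ← e']; abel
      rw [this]
      exact sub_mem hm (Nn_d B q v hv)

lemma Nn_open {A : Set X} {q : ℕ} {φ : Co X q} (h : φ ∈ Nn A q) :
    ∃ O, IsOpen O ∧ A ⊆ O ∧ φ ∈ Nn O q := by
  obtain ⟨h0, h⟩ := h
  choose! U hU haU hφ using h
  refine ⟨⋃ a ∈ A, U a, isOpen_biUnion hU, fun a ha => Set.mem_biUnion ha (haU a ha), h0, ?_⟩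
  intro x hx
  obtain ⟨a, ha, hxa⟩ := Set.mem_iUnion₂.1 hx
  exact ⟨U a, hU a ha, hxa, hφ a ha⟩

lemma Bc_open {A : Set X} {q : ℕ} {φ : Co X q} (h : φ ∈ Bc (dL X) (Nn A) q) :
    ∃ O, IsOpen O ∧ A ⊆ O ∧ φ ∈ Bc (dL X) (Nn O) q := by
  cases q with
  | zero => exact Nn_open h
  | succ q =>
    obtain ⟨n, hn, _, ⟨c, rfl⟩, rfl⟩ := Submodule.mem_sup.1 h
    obtain ⟨O, hO, hAO, h1⟩ := Nn_open hn
    exact ⟨O, hO, hAO, Submodule.add_mem_sup h1 ⟨c, rfl⟩⟩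

end Germs

section Convex
variable {X : Type*} [MetricSpace X] [CompactSpace X] {n : ℕ} {g : X → EuclideanSpace ℝ (Fin n)}

lemma acyc_convex_aux (hg : Continuous g) (hinj : Function.Injective g) (k : ℕ) :
    ∀ D : Set (EuclideanSpace ℝ (Fin n)), IsCompact D → Convex ℝ D → D.Nonempty →
      D ⊆ Set.range g → (∀ x ∈ D, ∀ y ∈ D, ∀ j : Fin n, k ≤ j → x j = y j) → Acyc (g ⁻¹' D) := by
  induction k with
  | zero =>
    rintro D - - ⟨y, hy⟩ hD hc
    obtain ⟨x, rfl⟩ := hD hy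
    have : g ⁻¹' D = {x} := by
      ext z
      constructor
      · intro hz
        refine hinj ?_
        ext j
        exact hc _ hz _ hy j (Nat.zero_le _)
      · rintro rfl
        exact hy
    rw [this]
    exact acyc_singleton x
  | succ k ih =>
    intro D hDc hDx hDn hDg hc
    by_cases hk : k < n
    swap
    · exact ih D hDc hDx hDn hDg (fun x hx y hy j hj => absurd j.2 (by omega))
    let f : EuclideanSpace ℝ (Fin n) → ℝ := fun x => x ⟨k, hk⟩
    have hf : Continuous f := by fun_prop
    have hlin : IsLinearMap ℝ f := ⟨fun _ _ => rfl, fun _ _ => rfl⟩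
    obtain ⟨a, b, hab⟩ : ∃ a b, f '' D = Set.Icc a b :=
      ⟨_, _, eq_Icc_of_connected_compact
        ((hDx.isConnected hDn).image f hf.continuousOn) (hDc.image hf)⟩
    have hle : a ≤ b := by
      obtain ⟨x, hx⟩ := hDn
      have : f x ∈ Set.Icc a b := hab ▸ Set.mem_image_of_mem f hx
      exact this.1.trans this.2
    let S : ℝ → ℝ → Set X := fun c c' => g ⁻¹' (D ∩ f ⁻¹' Set.Icc c c')
    have hSc : ∀ c c', IsClosed (S c c') := fun c c' =>
      (hDc.isClosed.inter (isClosed_Icc.preimage hf)).preimage hg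
    have hslice : ∀ c ∈ Set.Icc a b, Acyc (S c c) := by
      intro c hcab
      refine ih _ (hDc.inter_right (isClosed_Icc.preimage hf))
        (hDx.inter ((convex_Icc c c).is_linear_preimage hlin)) ?_
        (Set.inter_subset_left.trans hDg) ?_
      · rw [← hab] at hcab
        obtain ⟨x, hx, rfl⟩ := hcab
        exact ⟨x, hx, le_rfl, le_rfl⟩
      · rintro x ⟨hx, hx1, hx2⟩ y ⟨hy, hy1, hy2⟩ j hj
        rcases Nat.eq_or_lt_of_le hj with h | h
        · have : j = ⟨k, hk⟩ := Fin.ext h.symm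
          subst this
          exact (le_antisymm hx2 hx1).trans (le_antisymm hy2 hy1).symm
        · exact hc x hx y hy j h
    intro q φ hφ
    have hsub : ∀ c c', S c c' ⊆ g ⁻¹' D := fun c c' x hx => hx.1
    have hsl : ∀ c ∈ Set.Icc a b, φ ∈ Bc (dL X) (Nn (S c c)) q := fun c hcab =>
      hslice c hcab q (Zc_anti (hsub c c) q hφ)
    have hloc : ∀ c : Set.Icc a b, ∃ W : Set ℝ, IsOpen W ∧ c.1 ∈ W ∧
        ∀ u v, Set.Icc u v ⊆ W → φ ∈ Bc (dL X) (Nn (S u v)) q := by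
      rintro ⟨c, hcab⟩
      obtain ⟨O, hO, hSO, h⟩ := Bc_open (hsl c hcab)
      have hcl : IsClosed ((f ∘ g) '' (g ⁻¹' D \ O)) := by
        refine (IsCompact.image ?_ (hf.comp hg)).isClosed
        exact ((hDc.isClosed.preimage hg).inter hO.isClosed_compl).isCompact
      refine ⟨_, hcl.isOpen_compl, ?_, ?_⟩
      · rintro ⟨x, ⟨hx, hxO⟩, hxc⟩
        refine hxO (hSO ⟨hx, ?_⟩)
        change f (g x) = c at hxc
        exact ⟨hxc.ge, hxc.le⟩
      · intro u v huv
        refine Bc_mono (fun p => Nn_anti ?_ p) q h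
        rintro x ⟨hx, hx2⟩
        by_contra hxO
        exact huv hx2 ⟨x, ⟨hx, hxO⟩, rfl⟩
    choose W hW hcW hWB using hloc
    obtain ⟨t, ht0, htm, ⟨m, hm⟩, ht⟩ := exists_monotone_Icc_subset_open_cover_Icc hle
      (c := fun c => Subtype.val ⁻¹' W c) (fun c => (hW c).preimage continuous_subtype_val)
      (fun c _ => Set.mem_iUnion.2 ⟨c, hcW c⟩)
    have main : ∀ j, φ ∈ Bc (dL X) (Nn (S a (t j))) q := by
      intro j
      induction j with
      | zero => rw [ht0]; exact hsl a ⟨le_rfl, hle⟩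
      | succ j ihj =>
        have l1 : a ≤ (t j : ℝ) := (t j).2.1
        have l2 : (t j : ℝ) ≤ t (j + 1) := htm (Nat.le_succ j)
        have hU : S a (t (j + 1)) = S a (t j) ∪ S (t j) (t (j + 1)) := by
          simp only [S]
          rw [← Set.preimage_union, ← Set.inter_union_distrib_left, ← Set.preimage_union,
            Set.Icc_union_Icc_eq_Icc l1 l2]
        have hInt : S a (t j) ∩ S (t j) (t (j + 1)) = S (t j) (t j) := by
          ext x
          constructor
          · rintro ⟨⟨h1, h2⟩, ⟨h3, h4⟩⟩
            exact ⟨h1, h4.1, h2.2⟩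
          · rintro ⟨h1, h2⟩
            exact ⟨⟨h1, l1.trans h2.1, h2.2⟩, ⟨h1, h2.1, h2.2.trans l2⟩⟩
        rw [hU]
        refine acyc_concat (hSc _ _) (hSc _ _) ?_ q ihj ?_
        · rw [hInt]
          exact hslice _ (t j).2
        · obtain ⟨c, hcc⟩ := ht j
          refine hWB c _ _ ?_
          intro y hy
          exact hcc (show (⟨y, l1.trans hy.1, hy.2.trans (t (j + 1)).2.2⟩ : Set.Icc a b) ∈
            Set.Icc (t j) (t (j + 1)) from hy)
    have hfin := main m
    rw [hm m le_rfl] at hfin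
    have : S a b = g ⁻¹' D := by
      refine Set.Subset.antisymm (hsub a b) fun x hx => ⟨hx, ?_⟩
      change f (g x) ∈ Set.Icc a b
      rw [← hab]
      exact Set.mem_image_of_mem f hx
    rwa [this] at hfin

lemma acyc_convex (hg : Continuous g) (hinj : Function.Injective g)
    {D : Set (EuclideanSpace ℝ (Fin n))} (h1 : IsCompact D) (h2 : Convex ℝ D) (h3 : D.Nonempty)
    (h4 : D ⊆ Set.range g) : Acyc (g ⁻¹' D) :=
  acyc_convex_aux hg hinj n D h1 h2 h3 h4 (fun _ _ _ _ j hj => absurd j.2 (by omega))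

end Convex

section Main

lemma rlen_eq_zero {R V : Type*} [Ring R] [AddCommGroup V] [Module R V] {P Q : Submodule R V}
    (h : Q ≤ P) : rlen P Q = 0 := by
  unfold rlen
  rw [Module.length_eq_zero_iff, Submodule.submoduleOf_eq_top.2 h]
  infer_instance

lemma chi_empty (X : Type*) [MetricSpace X] : HasChi (hc (dL X) (Nn (∅ : Set X))) 1 := by
  have hN : ∀ q, Nn (∅ : Set X) (q + 1) = ⊤ := by
    intro q
    rw [eq_top_iff]
    exact fun φ _ => ⟨fun h => by omega, fun a ha => ha.elim⟩
  refine ⟨fun q => if q = 0 then 1 else 0, ?_, 1, ?_, by simp⟩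
  · rintro (_ | q)
    · have h0 : Nn (∅ : Set X) 0 = ⊥ := by
        rw [eq_bot_iff]
        exact fun φ h => h.1 rfl
      have h1 : Zc (dL X) (Nn (∅ : Set X)) 0 = ⊤ := by
        unfold Zc
        rw [hN, Submodule.comap_top]
      have h2 : Bc (dL X) (Nn (∅ : Set X)) 0 = ⊥ := h0
      unfold hc
      rw [h1, h2]
      unfold rlen
      have hb : (⊥ : Submodule ℚ (Co X 0)).submoduleOf ⊤ = ⊥ := by
        rw [eq_bot_iff]
        intro x hx
        exact Subtype.ext hx
      rw [((Submodule.quotEquivOfEqBot _ hb).trans Submodule.topEquiv).length_eq,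
        (LinearEquiv.funUnique (Fin 0 → X) ℚ ℚ).length_eq, Module.length_eq_one]
      simp
    · unfold hc
      rw [rlen_eq_zero]
      · simp
      · refine le_trans le_top (le_trans (le_of_eq (hN q).symm) (N_le_Bc _ _))
  · intro q hq
    simp
    omega

variable {X : Type*} [MetricSpace X] [CompactSpace X] {n : ℕ} {g : X → EuclideanSpace ℝ (Fin n)}

/-- union of the hulls of the faces in `L` -/
def hullU (L : Finset (Finset (EuclideanSpace ℝ (Fin n)))) : Set (EuclideanSpace ℝ (Fin n)) :=
  ⋃ s ∈ L, convexHull ℝ (s : Set (EuclideanSpace ℝ (Fin n)))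

lemma isCompact_hullU (L : Finset (Finset (EuclideanSpace ℝ (Fin n)))) : IsCompact (hullU L) :=
  L.isCompact_biUnion fun s _ => s.finite_toSet.isCompact_convexHull ℝ

open Geometry in
lemma chi_complex (hg : Continuous g) (hinj : Function.Injective g)
    (K : SimplicialComplex ℝ (EuclideanSpace ℝ (Fin n))) (hr : Set.range g = K.space) (m : ℕ) :
    ∀ L : Finset (Finset (EuclideanSpace ℝ (Fin n))), L.card = m → (∀ s ∈ L, s ∈ K.faces) →
      (∀ s ∈ L, ∀ t ⊆ s, t.Nonempty → t ∈ L) →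
      HasChi (hc (dL X) (Nn (g ⁻¹' hullU L))) (1 + ∑ s ∈ L, (-1 : ℤ) ^ s.card) := by
  classical
  induction m using Nat.strong_induction_on with
  | _ m ih =>
  intro L hLm hLK hLd
  rcases L.eq_empty_or_nonempty with rfl | hne
  · have : g ⁻¹' hullU (∅ : Finset (Finset (EuclideanSpace ℝ (Fin n)))) = ∅ := by simp [hullU]
    rw [this]
    simpa using chi_empty X
  obtain ⟨s, hs, hmax⟩ := L.exists_max_image Finset.card hne
  have hsn : s.Nonempty := K.nonempty_of_mem_faces (hLK s hs)
  set L1 := L.erase s with hL1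
  set L2 := s.powerset.erase ∅ |>.erase s with hL2
  have hL2mem : ∀ t, t ∈ L2 ↔ t ≠ s ∧ t.Nonempty ∧ t ⊆ s := by
    intro t
    simp [hL2, Finset.nonempty_iff_ne_empty]
  have hL21 : L2 ⊆ L1 := by
    intro t ht
    rw [hL2mem] at ht
    exact Finset.mem_erase.2 ⟨ht.1, hLd s hs t ht.2.2 ht.2.1⟩
  have hc1 : L1.card < m := by
    rw [← hLm]; exact Finset.card_erase_lt_of_mem hs
  have hc2 : L2.card < m := (Finset.card_le_card hL21).trans_lt hc1
  have H1 := ih _ hc1 L1 rfl (fun t ht => hLK t (Finset.mem_of_mem_erase ht)) (by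
    intro t ht u hu hun
    refine Finset.mem_erase.2 ⟨?_, hLd t (Finset.mem_of_mem_erase ht) u hu hun⟩
    rintro rfl
    refine (Finset.mem_erase.1 ht).1 ?_
    exact (Finset.eq_of_subset_of_card_le hu (hmax t (Finset.mem_of_mem_erase ht))).symm)
  have H2 := ih _ hc2 L2 rfl (fun t ht => hLK t (Finset.mem_of_mem_erase (hL21 ht))) (by
    intro t ht u hu hun
    rw [hL2mem] at ht ⊢
    refine ⟨?_, hun, hu.trans ht.2.2⟩
    rintro rfl
    exact ht.1 (ht.2.2.antisymm hu))
  set D := convexHull ℝ (s : Set (EuclideanSpace ℝ (Fin n))) with hD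
  have hDc : IsCompact D := s.finite_toSet.isCompact_convexHull ℝ
  have hun : g ⁻¹' hullU L = g ⁻¹' hullU L1 ∪ g ⁻¹' D := by
    rw [← Set.preimage_union]
    congr 1
    rw [← Finset.insert_erase hs, hullU, Finset.set_biUnion_insert, Set.union_comm]
    rfl
  have hint : g ⁻¹' hullU L2 = g ⁻¹' hullU L1 ∩ g ⁻¹' D := by
    rw [← Set.preimage_inter]
    congr 1
    ext x
    simp only [hullU, Set.mem_inter_iff, Set.mem_iUnion, exists_prop]
    constructor
    · rintro ⟨t, ht, hx⟩
      refine ⟨⟨t, hL21 ht, hx⟩, ?_⟩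
      rw [hL2mem] at ht
      exact convexHull_mono (by exact_mod_cast ht.2.2) hx
    · rintro ⟨⟨t, ht, hx⟩, hxs⟩
      have htL := Finset.mem_of_mem_erase ht
      have h3 := K.inter_subset_convexHull (hLK t htL) (hLK s hs) ⟨hx, hxs⟩
      rw [← Finset.coe_inter] at h3
      refine ⟨t ∩ s, ?_, h3⟩
      rw [hL2mem]
      refine ⟨?_, ?_, Finset.inter_subset_right⟩
      · intro he
        have hst : s ⊆ t := Finset.inter_eq_right.1 he
        exact (Finset.mem_erase.1 ht).1
          (Finset.eq_of_subset_of_card_le hst (hmax t htL)).symm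
      · have : (convexHull ℝ ((t ∩ s : Finset _) : Set (EuclideanSpace ℝ (Fin n)))).Nonempty :=
          ⟨x, h3⟩
        rw [convexHull_nonempty_iff] at this
        exact_mod_cast this
  have hac : Acyc (g ⁻¹' D) := by
    refine acyc_convex hg hinj hDc (convex_convexHull ℝ _) ?_ ?_
    · rw [hD, convexHull_nonempty_iff]
      exact_mod_cast hsn
    · rw [hr]
      exact K.convexHull_subset_space (hLK s hs)
  have hA : IsClosed (g ⁻¹' hullU L1) := (isCompact_hullU L1).isClosed.preimage hg
  have hB : IsClosed (g ⁻¹' D) := hDc.isClosed.preimage hg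
  have key := mayer_vietoris (d := dL X) dL_dL (N := Nn (g ⁻¹' hullU L1)) (M := Nn (g ⁻¹' D))
    (I := Nn (g ⁻¹' hullU L)) (S := Nn (g ⁻¹' hullU L2)) (Nn_d _) (Nn_d _)
    (fun q => by rw [hun, Nn_union]) (fun q => by rw [hint, Nn_inter hA hB]) hac H1 H2
  convert key using 1
  have s1 : ∑ t ∈ L, (-1 : ℤ) ^ t.card = (-1) ^ s.card + ∑ t ∈ L1, (-1 : ℤ) ^ t.card :=
    (Finset.add_sum_erase L _ hs).symm
  have s2 := Finset.sum_powerset_neg_one_pow_card_of_nonempty hsn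
  rw [← Finset.add_sum_erase _ _ (Finset.empty_mem_powerset s),
    ← Finset.add_sum_erase _ _ (show s ∈ s.powerset.erase ∅ by
      simp [Finset.nonempty_iff_ne_empty.1 hsn])] at s2
  rw [← hL2] at s2
  simp only [Finset.card_empty, pow_zero] at s2
  rw [s1]
  linarith

end Main

end EulerInv

open EulerInv in
lemma faceCount_sum {α : Type*} (F : Set (Finset α)) (hfin : F.Finite)
    (hne : ∀ s ∈ F, s.Nonempty) (hdim : ∀ s ∈ F, s.card ≤ 3) :
    ∑ s ∈ hfin.toFinset, (-1 : ℤ) ^ s.card =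
      -((faceCount F 0 : ℤ) - (faceCount F 1 : ℤ) + (faceCount F 2 : ℤ)) := by
  classical
  have h : ∀ i, (faceCount F i : ℤ) = ∑ s ∈ hfin.toFinset, if s.card = i + 1 then (1 : ℤ) else 0 := by
    intro i
    rw [Finset.sum_boole, faceCount, ← Set.ncard_coe_finset]
    congr 3
    ext s
    simp
  rw [h, h, h, ← Finset.sum_sub_distrib, ← Finset.sum_add_distrib, ← Finset.sum_neg_distrib]
  refine Finset.sum_congr rfl fun s hs => ?_
  rw [Set.Finite.mem_toFinset] at hs
  have h1 := Finset.card_pos.2 (hne s hs)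
  have h2 := hdim s hs
  obtain h | h | h : s.card = 1 ∨ s.card = 2 ∨ s.card = 3 := by omega
  all_goals simp [h]

open EulerInv in
lemma chi_space {X : Type*} [MetricSpace X] [CompactSpace X] {n : ℕ}
    (T : SimplicialComplex ℝ (EuclideanSpace ℝ (Fin n))) (hfin : T.faces.Finite)
    (hdim : ∀ s ∈ T.faces, s.card ≤ 3) (h : X ≃ₜ ↥T.space) :
    HasChi (hc (dL X) (Nn (Set.univ : Set X)))
      (1 - ((faceCount T.faces 0 : ℤ) - (faceCount T.faces 1 : ℤ) + (faceCount T.faces 2 : ℤ))) := by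
  have hr : Set.range (fun x => (h x : EuclideanSpace ℝ (Fin n))) = T.space := by
    have := Set.range_comp (Subtype.val : T.space → _) h
    rw [h.surjective.range_eq, Set.image_univ, Subtype.range_coe] at this
    exact this
  have key := chi_complex (X := X) (g := fun x => (h x : EuclideanSpace ℝ (Fin n)))
    (continuous_subtype_val.comp h.continuous) (Subtype.val_injective.comp h.injective) T hr
    _ hfin.toFinset rfl (fun s hs => by simpa using hs)
    (fun s hs t hts htn => by
      simp only [Set.Finite.mem_toFinset] at hs ⊢
      exact T.down_closed hs hts htn)
  rw [faceCount_sum T.faces hfin (fun s hs => T.nonempty_of_mem_faces hs) hdim] at key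
  have hu : (fun x => (h x : EuclideanSpace ℝ (Fin n))) ⁻¹' hullU hfin.toFinset = Set.univ := by
    rw [Set.eq_univ_iff_forall]
    intro x
    obtain ⟨s, hs, hx⟩ := T.mem_space_iff.1 (h x).2
    exact Set.mem_biUnion (by simpa using hs) hx
  rw [hu, ← sub_eq_add_neg] at key
  exact key

/-- Topological invariance of the Euler characteristic for surfaces: if two finite
2-dimensional simplicial complexes triangulate homeomorphic compact surfaces
(compact 2-manifolds), they have the same alternating sum `n₀ - n₁ + n₂`. -/
theorem euler_char_topological_invariance (n n' : ℕ)
    (T : SimplicialComplex ℝ (EuclideanSpace ℝ (Fin n)))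
    (T' : SimplicialComplex ℝ (EuclideanSpace ℝ (Fin n')))
    (hfin : T.faces.Finite) (hfin' : T'.faces.Finite)
    (hdim : ∀ s ∈ T.faces, s.card ≤ 3) (hdim' : ∀ s ∈ T'.faces, s.card ≤ 3)
    (hcompact : IsCompact T.space)
    (hsurface : Nonempty (ChartedSpace (EuclideanSpace ℝ (Fin 2)) ↥T.space))
    (hhomeo : Nonempty (↥T.space ≃ₜ ↥T'.space)) :
    (faceCount T.faces 0 : ℤ) - (faceCount T.faces 1 : ℤ) + (faceCount T.faces 2 : ℤ)
      = (faceCount T'.faces 0 : ℤ) - (faceCount T'.faces 1 : ℤ)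
          + (faceCount T'.faces 2 : ℤ) := by
  obtain ⟨e⟩ := hhomeo
  have : CompactSpace ↥T.space := isCompact_iff_compactSpace.1 hcompact
  have h1 := chi_space T hfin hdim (Homeomorph.refl _)
  have h2 := chi_space T' hfin' hdim' e
  have := h1.unique h2
  linarith
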